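/- Fix α > 0 and let δ_α be the smoothed 2-point delta function with parameter α. Then for every real λ, the convolution ∫_ℝ max(η,0) δ_α(λ−η) dη equals the piecewise quartic function λ_α⁺(λ) given by: 0 for λ ≤ −1.5α; (1/α)(λ⁴/(24α²) + λ³/(4α) + 9λ²/16 + 9αλ/16 + 27α²/128) for −1.5α ≤ λ ≤ −0.5α; (1/α)(−λ⁴/(12α²) + 3λ²/8 + αλ/2 + 13α²/64) for −0.5α ≤ λ ≤ 0.5α; (1/α)(λ⁴/(24α²) − λ³/(4α) + 9λ²/16 + 7αλ/16 + 27α²/128) for 0.5α ≤ λ ≤ 1.5α; and λ for λ ≥ 1.5α. -/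

import Mathlib

/-!
The kernel `smoothedDelta α` is the quadratic cardinal B-spline with knots `±α/2`, `±3α/2`, hence
a combination of truncated squares, `(1 / (2α³)) ∑ wₖ (l + k)₊²`, with weights `1, -3, 3, -1` at
`k = 3α/2, α/2, -α/2, -3α/2` (`smoothedDelta_eq_spline`). Each truncated square is convolved with
the positive part separately: `∫ η₊ (c - η)₊² dη = c₊⁴ / 12`, an integral effectively over `[0, c]`
(`hasConv_pos_sq`). The resulting combination of truncated fourth powers is `lamPlus`, by comparing
polynomials between consecutive knots (`lamPlus_eq_spline`).
-/

open MeasureTheory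

/-- The smoothed 2-point delta function with parameter `α`. -/
noncomputable def smoothedDelta (α l : ℝ) : ℝ :=
  if |l| ≤ 0.5 * α then (1 / α) * (3 / 4 - l ^ 2 / α ^ 2)
  else if |l| ≤ 1.5 * α then (1 / α) * (9 / 8 - 3 / 2 * (|l| / α) + 1 / 2 * (l ^ 2 / α ^ 2))
  else 0

/-- The piecewise quartic regularized positive-part function of the smoothed
2-point convolution method. -/
noncomputable def lamPlus (α l : ℝ) : ℝ :=
  if l ≤ -(1.5 * α) then 0
  else if l ≤ -(0.5 * α) then
    (1 / α) * (l ^ 4 / (24 * α ^ 2) + l ^ 3 / (4 * α) + 9 * l ^ 2 / 16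
      + 9 * α * l / 16 + 27 * α ^ 2 / 128)
  else if l ≤ 0.5 * α then
    (1 / α) * (-(l ^ 4) / (12 * α ^ 2) + 3 * l ^ 2 / 8 + α * l / 2 + 13 * α ^ 2 / 64)
  else if l ≤ 1.5 * α then
    (1 / α) * (l ^ 4 / (24 * α ^ 2) - l ^ 3 / (4 * α) + 9 * l ^ 2 / 16
      + 7 * α * l / 16 + 27 * α ^ 2 / 128)
  else l

/-- The convolution of the positive part with a truncated square converges absolutely, because the
integrand vanishes outside `[0, c]`, and is a truncated quartic. -/
lemma hasConv_pos_sq (c : ℝ) :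
    Integrable (fun η : ℝ => max η 0 * max (c - η) 0 ^ 2) ∧
      ∫ η : ℝ, max η 0 * max (c - η) 0 ^ 2 = max c 0 ^ 4 / 12 := by
  rcases le_total c 0 with hc | hc
  · have h : (fun η : ℝ => max η 0 * max (c - η) 0 ^ 2) = fun _ => 0 := by
      funext η
      rcases le_total η 0 with h | h
      · simp [max_eq_right h]
      · simp [max_eq_right (by linarith : c - η ≤ 0)]
    rw [h, max_eq_right hc]
    simp
  · have h : (fun η : ℝ => max η 0 * max (c - η) 0 ^ 2)
        = (Set.Ioc 0 c).indicator (fun η => η * (c - η) ^ 2) := by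
      funext η
      by_cases hη : η ∈ Set.Ioc 0 c
      · rw [Set.indicator_of_mem hη, max_eq_left hη.1.le, max_eq_left (by linarith [hη.2])]
      · rw [Set.indicator_of_notMem hη]
        rcases le_or_gt η 0 with h | h
        · simp [max_eq_right h]
        · have : c < η := by
            by_contra! h'
            exact hη ⟨h, h'⟩
          simp [max_eq_right (by linarith : c - η ≤ 0)]
    rw [h, max_eq_left hc]
    constructor
    · rw [integrable_indicator_iff measurableSet_Ioc]
      exact (Continuous.integrableOn_Icc (by fun_prop)).mono_set Set.Ioc_subset_Icc_self
    · rw [integral_indicator measurableSet_Ioc, ← intervalIntegral.integral_of_le hc]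
      have hd : ∀ x ∈ Set.uIcc 0 c, HasDerivAt
          (fun η : ℝ => c ^ 2 * η ^ 2 / 2 - 2 * c * η ^ 3 / 3 + η ^ 4 / 4)
          (x * (c - x) ^ 2) x := by
        intro x _
        have h2 := ((hasDerivAt_pow 2 x).const_mul (c ^ 2)).div_const 2
        have h3 := ((hasDerivAt_pow 3 x).const_mul (2 * c)).div_const 3
        have h4 := (hasDerivAt_pow 4 x).div_const 4
        refine ((h2.sub h3).add h4).congr_deriv ?_
        norm_num
        ring
      rw [intervalIntegral.integral_eq_sub_of_hasDerivAt hd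
        (Continuous.intervalIntegrable (by fun_prop) _ _)]
      ring

/-- The smoothed delta function as a quadratic B-spline. -/
lemma smoothedDelta_eq_spline (α : ℝ) (hα : 0 < α) (x : ℝ) :
    smoothedDelta α x = (1 / (2 * α ^ 3)) *
      (max (x + 3 / 2 * α) 0 ^ 2 - 3 * max (x + 1 / 2 * α) 0 ^ 2
        + 3 * max (x - 1 / 2 * α) 0 ^ 2 - max (x - 3 / 2 * α) 0 ^ 2) := by
  unfold smoothedDelta
  rcases abs_cases x with ⟨hx, h⟩ | ⟨hx, h⟩ <;> rw [hx] <;> split_ifs <;>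
  rcases max_cases (x + 3 / 2 * α) 0 with ⟨h1, h1'⟩ | ⟨h1, h1'⟩ <;>
  rcases max_cases (x + 1 / 2 * α) 0 with ⟨h2, h2'⟩ | ⟨h2, h2'⟩ <;>
  rcases max_cases (x - 1 / 2 * α) 0 with ⟨h3, h3'⟩ | ⟨h3, h3'⟩ <;>
  rcases max_cases (x - 3 / 2 * α) 0 with ⟨h4, h4'⟩ | ⟨h4, h4'⟩ <;>
  first
  | (exfalso; linarith)
  | (rw [h1, h2, h3, h4]; field_simp; ring1)
  -- At a knot two adjacent pieces overlap, and the point itself is known.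
  | (obtain rfl : x = 1 / 2 * α := by linarith
     rw [h1, h2, h3, h4]; field_simp; ring1)
  | (obtain rfl : x = 3 / 2 * α := by linarith
     rw [h1, h2, h3, h4]; field_simp; ring1)

/-- The regularized positive part as a quartic spline. -/
lemma lamPlus_eq_spline (α : ℝ) (hα : 0 < α) (x : ℝ) :
    lamPlus α x = (1 / (24 * α ^ 3)) *
      (max (x + 3 / 2 * α) 0 ^ 4 - 3 * max (x + 1 / 2 * α) 0 ^ 4
        + 3 * max (x - 1 / 2 * α) 0 ^ 4 - max (x - 3 / 2 * α) 0 ^ 4) := by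
  unfold lamPlus
  split_ifs <;>
  rcases max_cases (x + 3 / 2 * α) 0 with ⟨h1, h1'⟩ | ⟨h1, h1'⟩ <;>
  rcases max_cases (x + 1 / 2 * α) 0 with ⟨h2, h2'⟩ | ⟨h2, h2'⟩ <;>
  rcases max_cases (x - 1 / 2 * α) 0 with ⟨h3, h3'⟩ | ⟨h3, h3'⟩ <;>
  rcases max_cases (x - 3 / 2 * α) 0 with ⟨h4, h4'⟩ | ⟨h4, h4'⟩ <;>
  first
  | (exfalso; linarith)
  | (rw [h1, h2, h3, h4]; field_simp; ring1)
  -- At a knot two adjacent pieces overlap, and the point itself is known.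
  | (obtain rfl : x = -(3 / 2 * α) := by linarith
     rw [h1, h2, h3, h4]; field_simp; ring1)
  | (obtain rfl : x = -(1 / 2 * α) := by linarith
     rw [h1, h2, h3, h4]; field_simp; ring1)
  | (obtain rfl : x = 1 / 2 * α := by linarith
     rw [h1, h2, h3, h4]; field_simp; ring1)
  | (obtain rfl : x = 3 / 2 * α := by linarith
     rw [h1, h2, h3, h4]; field_simp; ring1)

/-- The convolution of the positive part with the smoothed 2-point delta function
equals the piecewise quartic function `λ_α⁺`. -/
theorem smoothed_two_point_convolution (α : ℝ) (hα : 0 < α) (l : ℝ) :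
    (∫ η : ℝ, max η 0 * smoothedDelta α (l - η)) = lamPlus α l := by
  obtain ⟨i1, e1⟩ := hasConv_pos_sq (l + 3 / 2 * α)
  obtain ⟨i2, e2⟩ := hasConv_pos_sq (l + 1 / 2 * α)
  obtain ⟨i3, e3⟩ := hasConv_pos_sq (l - 1 / 2 * α)
  obtain ⟨i4, e4⟩ := hasConv_pos_sq (l - 3 / 2 * α)
  have h : (fun η : ℝ => max η 0 * smoothedDelta α (l - η)) = fun η => (1 / (2 * α ^ 3)) *
      (max η 0 * max (l + 3 / 2 * α - η) 0 ^ 2 - 3 * (max η 0 * max (l + 1 / 2 * α - η) 0 ^ 2)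
        + 3 * (max η 0 * max (l - 1 / 2 * α - η) 0 ^ 2)
        - max η 0 * max (l - 3 / 2 * α - η) 0 ^ 2) := by
    funext η
    rw [smoothedDelta_eq_spline α hα, sub_add_eq_add_sub, sub_add_eq_add_sub,
      sub_right_comm l η, sub_right_comm l η]
    ring
  have i12 : Integrable (fun η : ℝ => max η 0 * max (l + 3 / 2 * α - η) 0 ^ 2
      - 3 * (max η 0 * max (l + 1 / 2 * α - η) 0 ^ 2)) := i1.sub (i2.const_mul 3)
  have i123 : Integrable (fun η : ℝ => max η 0 * max (l + 3 / 2 * α - η) 0 ^ 2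
      - 3 * (max η 0 * max (l + 1 / 2 * α - η) 0 ^ 2)
      + 3 * (max η 0 * max (l - 1 / 2 * α - η) 0 ^ 2)) := i12.add (i3.const_mul 3)
  rw [h, integral_const_mul, integral_sub i123 i4, integral_add i12 (i3.const_mul 3),
    integral_sub i1 (i2.const_mul 3), integral_const_mul, integral_const_mul, e1, e2, e3, e4,
    lamPlus_eq_spline α hα]
  ring
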